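/- Let X be a finite set, L ≥ 1 a real number, q ∈ (0,1)^X, and define p ∈ (0,1)^X by p_x = 1 - (1 - q_x)^L for each x ∈ X. If H ⊆ 2^X is 1-bounded (every member of H is a singleton or empty; in fact all members are singletons), then E[c_q(L_1(H, X_p))] ≤ 1/(e·L), where the expectation is over the random set X_p sampled from μ_p. -/

import Mathlib

/-- The product measure `μ_p` on subsets of a finite set `X`:
`μ_p(S) = ∏_{x∈S} p_x · ∏_{y∉S} (1-p_y)`. -/
def prodMeasure {X : Type*} [Fintype X] [DecidableEq X] (p : X → ℝ) (S : Finset X) : ℝ :=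
  (∏ x ∈ S, p x) * ∏ x ∈ Sᶜ, (1 - p x)

/-- `⟨G⟩`: the up-closure of a family `G` of subsets of `X`. -/
def upClosure {X : Type*} [Fintype X] [DecidableEq X] (G : Finset (Finset X)) :
    Finset (Finset X) :=
  Finset.univ.filter (fun T => ∃ S ∈ G, S ⊆ T)

/-- `e_q(H) = Σ_{S∈H} ∏_{x∈S} q_x`. -/
def eCost {X : Type*} (q : X → ℝ) (H : Finset (Finset X)) : ℝ :=
  ∑ S ∈ H, ∏ x ∈ S, q x

/-- The `q`-cost `c_q(H) = min{e_q(G) : H ⊆ ⟨G⟩}`. -/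
noncomputable def qCost {X : Type*} [Fintype X] [DecidableEq X] (q : X → ℝ)
    (H : Finset (Finset X)) : ℝ :=
  sInf {c : ℝ | ∃ G : Finset (Finset X), H ⊆ upClosure G ∧ c = eCost q G}

/-- `Pr[X_p ∈ ⟨H⟩]`, where `X_p` is sampled from `μ_p`. -/
def prInUpClosure {X : Type*} [Fintype X] [DecidableEq X] (p : X → ℝ)
    (H : Finset (Finset X)) : ℝ :=
  ∑ S ∈ upClosure H, prodMeasure p S

/-- The fragments `F(H, W) = {S \ W : S ∈ H}`. -/
def fragments {X : Type*} [DecidableEq X] (H : Finset (Finset X)) (W : Finset X) :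
    Finset (Finset X) :=
  H.image (fun S => S \ W)

/-- The minimal fragments `F*(H, W)`: inclusion-wise minimal elements of `F(H, W)`. -/
def minFragments {X : Type*} [DecidableEq X] (H : Finset (Finset X)) (W : Finset X) :
    Finset (Finset X) :=
  (fragments H W).filter (fun T => ∀ T' ∈ fragments H W, T' ⊆ T → T' = T)

/-- The large minimal fragments `L_m(H, W) = {T ∈ F*(H, W) : |T| ≥ m}`. -/
def largeFrag {X : Type*} [DecidableEq X] (m : ℕ) (H : Finset (Finset X)) (W : Finset X) :
    Finset (Finset X) :=
  (minFragments H W).filter (fun T => m ≤ T.card)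

/-- The small minimal fragments `S_m(H, W) = {T ∈ F*(H, W) : |T| < m}`. -/
def smallFrag {X : Type*} [DecidableEq X] (m : ℕ) (H : Finset (Finset X)) (W : Finset X) :
    Finset (Finset X) :=
  (minFragments H W).filter (fun T => T.card < m)

/-!
If `∅ ∈ H`, the empty fragment is the only minimal one, so the cost is always `0`. Otherwise `H`
consists of the singletons of a set `Y`: if `X_p` meets `Y` then the empty fragment again kills
`L_1(H, X_p)`, and if it misses `Y` then `L_1(H, X_p) = H`. Hence the expected cost is exactly
`∏_{x ∈ Y} (1 - p_x) · c_q(H)`. With `s = ∑_{x ∈ Y} q_x` we have `c_q(H) ≤ s` and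
`1 - p_x = (1 - q_x)^L ≤ exp (-L q_x)`, so the expected cost is at most `s · exp (-L s) ≤ 1 / (eL)`.
-/

section Fragments

variable {X : Type*} [DecidableEq X] {H : Finset (Finset X)} {S W : Finset X} {m : ℕ}

theorem minFragments_eq_singleton_empty (hS : S ∈ H) (hSW : S ⊆ W) :
    minFragments H W = {∅} := by
  have hempty : ∅ ∈ fragments H W :=
    Finset.mem_image.2 ⟨S, hS, Finset.sdiff_eq_empty_iff_subset.2 hSW⟩
  ext T
  rw [minFragments, Finset.mem_filter, Finset.mem_singleton]
  constructor
  · rintro ⟨-, hmin⟩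
    exact (hmin ∅ hempty T.empty_subset).symm
  · rintro rfl
    exact ⟨hempty, fun T _ hT => Finset.subset_empty.1 hT⟩

theorem largeFrag_eq_empty (hm : 0 < m) (hS : S ∈ H) (hSW : S ⊆ W) : largeFrag m H W = ∅ := by
  rw [largeFrag, minFragments_eq_singleton_empty hS hSW, Finset.filter_singleton, if_neg]
  simpa only [Finset.card_empty, not_le] using hm

theorem fragments_eq_self (hdisj : ∀ S ∈ H, Disjoint S W) : fragments H W = H := by
  rw [fragments, Finset.image_congr fun S hS => Finset.sdiff_eq_self_of_disjoint (hdisj S hS),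
    Finset.image_id']

theorem minFragments_eq_self (hdisj : ∀ S ∈ H, Disjoint S W)
    (hanti : IsAntichain (· ⊆ ·) (H : Set (Finset X))) : minFragments H W = H := by
  rw [minFragments, fragments_eq_self hdisj, Finset.filter_eq_self]
  exact fun T hT T' hT' hsub => hanti.eq hT' hT hsub

theorem largeFrag_eq_self (hdisj : ∀ S ∈ H, Disjoint S W)
    (hanti : IsAntichain (· ⊆ ·) (H : Set (Finset X))) (hcard : ∀ S ∈ H, m ≤ S.card) :
    largeFrag m H W = H := by
  rw [largeFrag, minFragments_eq_self hdisj hanti, Finset.filter_eq_self]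
  exact hcard

theorem largeFrag_powersetCard_one (Y W : Finset X) :
    largeFrag 1 (Y.powersetCard 1) W = if Disjoint Y W then Y.powersetCard 1 else ∅ := by
  split_ifs with hdisj
  · have hsized := Set.sized_powersetCard Y 1
    refine largeFrag_eq_self (fun S hS => ?_) hsized.isAntichain fun S hS => (hsized hS).ge
    exact hdisj.mono_left (Finset.mem_powersetCard.1 hS).1
  · obtain ⟨x, hxY, hxW⟩ := Finset.not_disjoint_iff.1 hdisj
    have hx : {x} ∈ Y.powersetCard 1 :=
      Finset.mem_powersetCard.2 ⟨Finset.singleton_subset_iff.2 hxY, Finset.card_singleton x⟩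
    exact largeFrag_eq_empty one_pos hx (Finset.singleton_subset_iff.2 hxW)

end Fragments

theorem exists_eq_powersetCard_one_of_card_le_one {X : Type*} {H : Finset (Finset X)}
    (hbd : ∀ S ∈ H, S.card ≤ 1) (hempty : ∅ ∉ H) :
    ∃ Y : Finset X, H = Y.powersetCard 1 := by
  classical
  have hcard : ∀ S ∈ H, S.card = 1 := fun S hS =>
    (hbd S hS).antisymm (Finset.card_pos.2 (Finset.nonempty_of_ne_empty fun h => hempty (h ▸ hS)))
  refine ⟨H.biUnion id, Finset.Subset.antisymm (fun S hS => ?_) fun S hS => ?_⟩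
  · exact Finset.mem_powersetCard.2 ⟨Finset.subset_biUnion_of_mem id hS, hcard S hS⟩
  · obtain ⟨hSY, hS⟩ := Finset.mem_powersetCard.1 hS
    obtain ⟨x, rfl⟩ := Finset.card_eq_one.1 hS
    obtain ⟨T, hT, hxT⟩ := Finset.mem_biUnion.1 (Finset.singleton_subset_iff.1 hSY)
    obtain ⟨y, rfl⟩ := Finset.card_eq_one.1 (hcard T hT)
    rwa [Finset.mem_singleton.1 hxT]

section Cost

variable {X : Type*} {q : X → ℝ}

theorem eCost_nonneg (hq : ∀ x, 0 ≤ q x) (H : Finset (Finset X)) : 0 ≤ eCost q H :=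
  Finset.sum_nonneg fun _ _ => Finset.prod_nonneg fun x _ => hq x

theorem eCost_powersetCard_one (q : X → ℝ) (Y : Finset X) :
    eCost q (Y.powersetCard 1) = ∑ x ∈ Y, q x := by
  simp [eCost, Finset.powersetCard_one]

variable [Fintype X] [DecidableEq X]

theorem subset_upClosure (H : Finset (Finset X)) : H ⊆ upClosure H := fun S hS =>
  Finset.mem_filter.2 ⟨Finset.mem_univ S, S, hS, Finset.Subset.rfl⟩

theorem qCost_nonneg (hq : ∀ x, 0 ≤ q x) (H : Finset (Finset X)) : 0 ≤ qCost q H := by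
  refine Real.sInf_nonneg ?_
  rintro _ ⟨G, -, rfl⟩
  exact eCost_nonneg hq G

theorem qCost_le_eCost (hq : ∀ x, 0 ≤ q x) (H : Finset (Finset X)) : qCost q H ≤ eCost q H := by
  refine csInf_le ⟨0, ?_⟩ ⟨H, subset_upClosure H, rfl⟩
  rintro _ ⟨G, -, rfl⟩
  exact eCost_nonneg hq G

theorem qCost_empty (hq : ∀ x, 0 ≤ q x) : qCost q ∅ = 0 :=
  (qCost_le_eCost hq ∅).antisymm (qCost_nonneg hq ∅)

end Cost

section Expectation

variable {X : Type*} [Fintype X] [DecidableEq X]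

theorem sum_prodMeasure_disjoint (p : X → ℝ) (Y : Finset X) :
    ∑ W with Disjoint Y W, prodMeasure p W = ∏ x ∈ Y, (1 - p x) := by
  have hfilter : ({W | Disjoint Y W} : Finset (Finset X)) = Yᶜ.powerset := by
    ext W
    simp [Finset.subset_compl_iff_disjoint_left]
  have hsplit : ∀ W ∈ Yᶜ.powerset, prodMeasure p W =
      (∏ x ∈ Y, (1 - p x)) * ((∏ x ∈ W, p x) * ∏ x ∈ Yᶜ \ W, (1 - p x)) := by
    intro W hW
    have hYW : Y ⊆ Wᶜ := Finset.subset_compl_comm.1 (Finset.mem_powerset.1 hW)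
    have hcompl : Wᶜ \ Y = Yᶜ \ W := by rw [sdiff_eq, sdiff_eq, inf_comm]
    rw [prodMeasure, ← Finset.prod_sdiff hYW, hcompl]
    ring
  calc ∑ W with Disjoint Y W, prodMeasure p W
      = (∏ x ∈ Y, (1 - p x)) *
          ∑ W ∈ Yᶜ.powerset, (∏ x ∈ W, p x) * ∏ x ∈ Yᶜ \ W, (1 - p x) := by
        rw [hfilter, Finset.sum_congr rfl hsplit, Finset.mul_sum]
    _ = ∏ x ∈ Y, (1 - p x) := by
        simp only [← Finset.prod_add, add_sub_cancel, Finset.prod_const_one, mul_one]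

theorem sum_prodMeasure_mul_qCost_largeFrag_powersetCard_one {q : X → ℝ} (hq : ∀ x, 0 ≤ q x)
    (p : X → ℝ) (Y : Finset X) :
    ∑ W, prodMeasure p W * qCost q (largeFrag 1 (Y.powersetCard 1) W) =
      (∏ x ∈ Y, (1 - p x)) * qCost q (Y.powersetCard 1) := by
  simp only [largeFrag_powersetCard_one, apply_ite (qCost q), qCost_empty hq, mul_ite, mul_zero,
    ← Finset.sum_filter, ← Finset.sum_mul, sum_prodMeasure_disjoint]

end Expectation

theorem prod_one_sub_le_exp {X : Type*} {p q : X → ℝ} {L : ℝ} {Y : Finset X}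
    (hp_le : ∀ x ∈ Y, p x ≤ 1) (hp : ∀ x ∈ Y, 1 - p x ≤ Real.exp (-(L * q x))) :
    ∏ x ∈ Y, (1 - p x) ≤ Real.exp (-(L * ∑ x ∈ Y, q x)) :=
  calc ∏ x ∈ Y, (1 - p x) ≤ ∏ x ∈ Y, Real.exp (-(L * q x)) :=
        Finset.prod_le_prod (fun x hx => sub_nonneg.2 (hp_le x hx)) hp
    _ = Real.exp (-(L * ∑ x ∈ Y, q x)) := by
        rw [← Real.exp_sum, Finset.sum_neg_distrib, ← Finset.mul_sum]

theorem one_sub_rpow_le_exp_neg_mul {t L : ℝ} (ht : t ≤ 1) (hL : 0 ≤ L) :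
    (1 - t) ^ L ≤ Real.exp (-(L * t)) :=
  calc (1 - t) ^ L ≤ Real.exp (-t) ^ L :=
        Real.rpow_le_rpow (sub_nonneg.2 ht) (Real.one_sub_le_exp_neg t) hL
    _ = Real.exp (-(L * t)) := by rw [← Real.exp_mul, neg_mul, mul_comm]

theorem exp_neg_mul_mul_le {L : ℝ} (hL : 0 < L) (s : ℝ) :
    Real.exp (-(L * s)) * s ≤ 1 / (Real.exp 1 * L) :=
  calc Real.exp (-(L * s)) * s = L * s * Real.exp (-(L * s)) / L := by field_simp
    _ ≤ Real.exp (-1) / L := by gcongr; exact Real.mul_exp_neg_le_exp_neg_one (L * s)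
    _ = 1 / (Real.exp 1 * L) := by rw [Real.exp_neg, ← one_div, div_div]

theorem cost_lemma_one_bounded_general {X : Type*} [Fintype X] [DecidableEq X]
    {L : ℝ} (hL : 0 < L) {q p : X → ℝ} (hq : ∀ x, 0 ≤ q x) (hp_le : ∀ x, p x ≤ 1)
    (hp : ∀ x, 1 - p x ≤ Real.exp (-(L * q x)))
    {H : Finset (Finset X)} (hbd : ∀ S ∈ H, S.card ≤ 1) :
    ∑ W, prodMeasure p W * qCost q (largeFrag 1 H W) ≤ 1 / (Real.exp 1 * L) := by
  by_cases hempty : ∅ ∈ H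
  · simp only [largeFrag_eq_empty one_pos hempty (Finset.empty_subset _), qCost_empty hq,
      mul_zero, Finset.sum_const_zero]
    positivity
  obtain ⟨Y, rfl⟩ := exists_eq_powersetCard_one_of_card_le_one hbd hempty
  calc ∑ W, prodMeasure p W * qCost q (largeFrag 1 (Y.powersetCard 1) W)
      = (∏ x ∈ Y, (1 - p x)) * qCost q (Y.powersetCard 1) :=
        sum_prodMeasure_mul_qCost_largeFrag_powersetCard_one hq p Y
    _ ≤ Real.exp (-(L * ∑ x ∈ Y, q x)) * ∑ x ∈ Y, q x :=
        mul_le_mul (prod_one_sub_le_exp (fun x _ => hp_le x) fun x _ => hp x)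
          ((qCost_le_eCost hq _).trans_eq (eCost_powersetCard_one q Y))
          (qCost_nonneg hq _) (Real.exp_nonneg _)
    _ ≤ 1 / (Real.exp 1 * L) := exp_neg_mul_mul_le hL _

/-- Lemma 2: for `p_x = 1 - (1-q_x)^L` and `1`-bounded `H`,
`E[c_q(L_1(H, X_p))] ≤ 1/(eL)`. -/
theorem cost_lemma_one_bounded {X : Type*} [Fintype X] [DecidableEq X]
    (L : ℝ) (hL : 1 ≤ L)
    (q : X → ℝ) (hq : ∀ x, q x ∈ Set.Ioo (0 : ℝ) 1)
    (p : X → ℝ) (hp : ∀ x, p x = 1 - (1 - q x) ^ L)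
    (H : Finset (Finset X)) (hbd : ∀ S ∈ H, S.card ≤ 1) :
    ∑ W : Finset X, prodMeasure p W * qCost q (largeFrag 1 H W) ≤
      1 / (Real.exp 1 * L) := by
  have hL0 : 0 < L := one_pos.trans_le hL
  refine cost_lemma_one_bounded_general hL0 (fun x => (hq x).1.le) (fun x => ?_) (fun x => ?_) hbd
  · exact (hp x).trans_le (sub_le_self 1 (Real.rpow_nonneg (sub_nonneg.2 (hq x).2.le) L))
  · simpa only [hp, sub_sub_cancel] using one_sub_rpow_le_exp_neg_mul (hq x).2.le hL0.le
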